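/- arXiv:1207.3739 — 2 statements merged into one kernel-verified Lean document; each statement's English description precedes it below -/
import Mathlib

section
/- There exists a 2-dimensional left Leibniz algebra A that is not nilpotent but contains a unique nonzero nilpotent subalgebra H whose normal closure (smallest ideal of A containing H) equals A. Concretely, A has basis {a, b} with a·a = b, a·b = b, and all other products zero; then H = span{a − b} is this unique subalgebra. -/
open Polynomial LinearMap

/-- A (left) Leibniz algebra structure on the `K`-vector space `A`:
a bilinear multiplication satisfying `x(yz) = (xy)z + y(xz)`. -/
structure LeibnizMul (K A : Type*) [Field K] [AddCommGroup A] [Module K A] where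
  mul : A →ₗ[K] A →ₗ[K] A
  leibniz : ∀ x y z, mul x (mul y z) = mul (mul x y) z + mul y (mul x z)

namespace LeibnizMul

variable {K A : Type*} [Field K] [AddCommGroup A] [Module K A]

/-- The product of two subspaces: the span of all products `s·t`, `s ∈ S`, `t ∈ T`. -/
def mulSub (m : LeibnizMul K A) (S T : Submodule K A) : Submodule K A :=
  Submodule.span K (Set.image2 (fun x y => m.mul x y) (S : Set A) (T : Set A))

/-- Relative lower central series of the subalgebra `S`: `lcsIn m S n = S^(n+1)`,
i.e. `lcsIn m S 0 = S` and `lcsIn m S (n+1) = S · (lcsIn m S n)`. -/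
def lcsIn (m : LeibnizMul K A) (S : Submodule K A) : ℕ → Submodule K A
  | 0 => S
  | (n+1) => m.mulSub S (m.lcsIn S n)

/-- `A` is nilpotent: some term of the lower central series vanishes. -/
def IsNilpotent (m : LeibnizMul K A) : Prop := ∃ n, m.lcsIn ⊤ n = ⊥

/-- `S` is a subalgebra: a subspace closed under multiplication. -/
def IsSubalg (m : LeibnizMul K A) (S : Submodule K A) : Prop :=
  ∀ x ∈ S, ∀ y ∈ S, m.mul x y ∈ S

/-- `S` is a (two-sided) ideal. -/
def IsIdeal (m : LeibnizMul K A) (S : Submodule K A) : Prop :=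
  ∀ (x : A), ∀ y ∈ S, m.mul x y ∈ S ∧ m.mul y x ∈ S

/-- `M` is a maximal (proper) subalgebra. -/
def IsMaxSubalg (m : LeibnizMul K A) (M : Submodule K A) : Prop :=
  m.IsSubalg M ∧ M ≠ ⊤ ∧ ∀ S, m.IsSubalg S → M < S → S = ⊤

/-- The Frattini subalgebra: the intersection of all maximal subalgebras. -/
def frattini (m : LeibnizMul K A) : Submodule K A :=
  sInf {M | m.IsMaxSubalg M}

/-- The subalgebra generated by a single element `a`. -/
def subalgGen (m : LeibnizMul K A) (a : A) : Submodule K A :=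
  sInf {S | m.IsSubalg S ∧ a ∈ S}

/-- The normal closure of a subspace: the smallest ideal containing it. -/
def normalClosure (m : LeibnizMul K A) (S : Submodule K A) : Submodule K A :=
  sInf {I | m.IsIdeal I ∧ S ≤ I}

/-- The normalizer of a subspace `C`: all `x` with `x·c ∈ C` and `c·x ∈ C` for all `c ∈ C`. -/
def normalizer (m : LeibnizMul K A) (C : Submodule K A) : Submodule K A :=
  ⨅ c : C, (Submodule.comap (m.mul.flip (c : A)) C ⊓ Submodule.comap (m.mul (c : A)) C)

/-- The center of the subalgebra `S`: all `z ∈ S` with `z·x = x·z = 0` for all `x ∈ S`. -/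
def centerIn (m : LeibnizMul K A) (S : Submodule K A) : Submodule K A :=
  S ⊓ ⨅ x : S, (LinearMap.ker (m.mul.flip (x : A)) ⊓ LinearMap.ker (m.mul (x : A)))

/-- All `z ∈ S` with `z·x ∈ T` and `x·z ∈ T` for all `x ∈ S`. -/
def relCentralizer (m : LeibnizMul K A) (S T : Submodule K A) : Submodule K A :=
  S ⊓ ⨅ x : S, (Submodule.comap (m.mul.flip (x : A)) T ⊓ Submodule.comap (m.mul (x : A)) T)

/-- The upper central series of the subalgebra `S`:
`Z₀ = 0`, `Z_{j+1} = {z ∈ S : zS ⊆ Z_j and Sz ⊆ Z_j}`. -/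
def ucsIn (m : LeibnizMul K A) (S : Submodule K A) : ℕ → Submodule K A
  | 0 => ⊥
  | (j+1) => m.relCentralizer S (m.ucsIn S j)

/-- The right center `{r : A·r = 0}`. -/
def rightCenter (m : LeibnizMul K A) : Submodule K A := LinearMap.ker m.mul.flip

/-- Left-normed powers of `a`: `lpow m a k = a^(k+1)`. -/
def lpow (m : LeibnizMul K A) (a : A) : ℕ → A
  | 0 => a
  | (k+1) => m.mul a (m.lpow a k)

/-- The Fitting null component of left multiplication by `a`. -/
def fittingNull (m : LeibnizMul K A) (a : A) : Submodule K A :=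
  ⨆ k, LinearMap.ker ((m.mul a) ^ k)

end LeibnizMul

/-- The 2-dimensional Leibniz algebra on `K × K` with basis `a = (1,0)`, `b = (0,1)`,
multiplication `a·a = b`, `a·b = b`, all other products zero:
`(x₁,x₂)·(y₁,y₂) = (0, x₁y₁ + x₁y₂)`. -/
def ex3 (K : Type*) [Field K] : LeibnizMul K (K × K) where
  mul := LinearMap.mk₂ K (fun x y => (0, x.1 * y.1 + x.1 * y.2))
    (by intro x x' y; apply Prod.ext <;> simp <;> ring)
    (by intro c x y; apply Prod.ext <;> simp <;> ring)
    (by intro x y y'; apply Prod.ext <;> simp <;> ring)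
    (by intro c x y; apply Prod.ext <;> simp <;> ring)
  leibniz := by intro x y z; apply Prod.ext <;> simp <;> ring

/-!
In `ex3 K` the product is `x·y = (0, x₁(y₁ + y₂))`, so every left multiplication `x·_` acts on
products as the scalar `x₁`. If a nilpotent subspace `H` contains some `x` with `x₁ ≠ 0`, then all
products `x·y` with `y ∈ H` must vanish, which puts `H` inside the right center, the line spanned
by `a - b`. The subspaces containing such an `x` are exactly those whose normal closure is the whole
algebra: the line `x₁ = 0` is the left center, which is an ideal in every left Leibniz algebra, and
it is spanned by `b`, while an ideal containing `x` contains `x·a = x₁b`, hence `b`, hence also `a`.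
-/

namespace LeibnizMul

variable {K A : Type*} [Field K] [AddCommGroup A] [Module K A] {m : LeibnizMul K A}
  {S T : Submodule K A} {x y : A}

theorem mul_mem_mulSub (hx : x ∈ S) (hy : y ∈ T) : m.mul x y ∈ m.mulSub S T :=
  Submodule.subset_span (Set.mem_image2_of_mem hx hy)

theorem mul_pow_apply_mem_lcsIn (hx : x ∈ S) (hy : y ∈ S) (n : ℕ) :
    (m.mul x ^ n) y ∈ m.lcsIn S n := by
  induction n with
  | zero => exact hy
  | succ n ih =>
    rw [pow_succ', Module.End.mul_apply]
    exact mul_mem_mulSub hx ih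

theorem mem_rightCenter : y ∈ m.rightCenter ↔ ∀ x, m.mul x y = 0 :=
  LinearMap.ext_iff

theorem isSubalg_of_le_rightCenter (hS : S ≤ m.rightCenter) : m.IsSubalg S := by
  intro x _ y hy
  rw [mem_rightCenter.1 (hS hy) x]
  exact S.zero_mem

theorem lcsIn_one_eq_bot_of_le_rightCenter (hS : S ≤ m.rightCenter) : m.lcsIn S 1 = ⊥ := by
  refine Submodule.span_eq_bot.2 ?_
  rintro _ ⟨x, -, y, hy, rfl⟩
  exact mem_rightCenter.1 (hS hy) x

/-- The left center `{z : z·A = 0}`, the counterpart of `rightCenter`. -/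
def leftCenter (m : LeibnizMul K A) : Submodule K A := LinearMap.ker m.mul

theorem mem_leftCenter : x ∈ m.leftCenter ↔ ∀ y, m.mul x y = 0 :=
  LinearMap.ext_iff

theorem isIdeal_leftCenter (m : LeibnizMul K A) : m.IsIdeal m.leftCenter := by
  intro x z hz
  rw [mem_leftCenter] at hz
  constructor
  · refine mem_leftCenter.2 fun y => ?_
    simpa [hz] using (m.leibniz x z y).symm
  · rw [hz]
    exact m.leftCenter.zero_mem

theorem normalClosure_le {I : Submodule K A} (hI : m.IsIdeal I) (hS : S ≤ I) :
    m.normalClosure S ≤ I :=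
  sInf_le ⟨hI, hS⟩

end LeibnizMul

section ex3

open LeibnizMul

variable {K : Type*} [Field K]

theorem ex3_mul_apply (x y : K × K) : (ex3 K).mul x y = (0, x.1 * (y.1 + y.2)) :=
  Prod.ext rfl (mul_add _ _ _).symm

theorem ex3_mul_mul (x y z : K × K) :
    (ex3 K).mul x ((ex3 K).mul y z) = x.1 • (ex3 K).mul y z := by
  simp [ex3_mul_apply]

theorem ex3_mul_pow_succ_apply (x y : K × K) (n : ℕ) :
    ((ex3 K).mul x ^ (n + 1)) y = x.1 ^ n • (ex3 K).mul x y := by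
  induction n with
  | zero => simp
  | succ n ih =>
    rw [pow_succ', Module.End.mul_apply, ih, map_smul, ex3_mul_mul, smul_smul, ← pow_succ]

theorem mem_ex3_leftCenter {x : K × K} : x ∈ (ex3 K).leftCenter ↔ x.1 = 0 := by
  rw [mem_leftCenter]
  constructor
  · intro h
    simpa [ex3_mul_apply] using h (1, 0)
  · intro h y
    simp [ex3_mul_apply, h]

theorem exists_fst_ne_zero_of_not_le_ex3_leftCenter {S : Submodule K (K × K)}
    (hS : ¬ S ≤ (ex3 K).leftCenter) : ∃ x ∈ S, x.1 ≠ 0 := by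
  simpa only [mem_ex3_leftCenter] using SetLike.not_le_iff_exists.1 hS

theorem mem_ex3_rightCenter {y : K × K} : y ∈ (ex3 K).rightCenter ↔ y.1 + y.2 = 0 := by
  rw [mem_rightCenter]
  constructor
  · intro h
    simpa [ex3_mul_apply] using h (1, 0)
  · intro h x
    simp [ex3_mul_apply, h]

theorem ex3_rightCenter : (ex3 K).rightCenter = Submodule.span K {(1, -1)} := by
  ext y
  rw [mem_ex3_rightCenter, Submodule.mem_span_singleton, add_eq_zero_iff_neg_eq]
  simp [Prod.ext_iff]

theorem ex3_mul_eq_zero_iff {x y : K × K} (hx : x.1 ≠ 0) :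
    (ex3 K).mul x y = 0 ↔ y ∈ (ex3 K).rightCenter := by
  simp [ex3_mul_apply, mem_ex3_rightCenter, hx]

theorem ex3_le_rightCenter_of_lcsIn_eq_bot {S : Submodule K (K × K)} {n : ℕ}
    (hS : ¬ S ≤ (ex3 K).leftCenter) (hn : (ex3 K).lcsIn S n = ⊥) :
    S ≤ (ex3 K).rightCenter := by
  obtain ⟨x, hxS, hx⟩ := exists_fst_ne_zero_of_not_le_ex3_leftCenter hS
  intro y hy
  have hpow : ((ex3 K).mul x ^ n) y = 0 := by
    simpa [hn] using mul_pow_apply_mem_lcsIn (m := ex3 K) hxS hy n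
  have hsmul : x.1 ^ n • (ex3 K).mul x y = 0 := by
    rw [← ex3_mul_pow_succ_apply, pow_succ', Module.End.mul_apply, hpow, map_zero]
  exact (ex3_mul_eq_zero_iff hx).1 ((smul_eq_zero_iff_right (pow_ne_zero n hx)).1 hsmul)

theorem not_isNilpotent_ex3 : ¬ (ex3 K).IsNilpotent := by
  rintro ⟨n, hn⟩
  have hleft : ¬ (⊤ : Submodule K (K × K)) ≤ (ex3 K).leftCenter :=
    fun h => one_ne_zero (mem_ex3_leftCenter.1 (h (Submodule.mem_top (x := (1, 0)))))
  have ha : ((1, 0) : K × K) ∈ (ex3 K).rightCenter :=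
    ex3_le_rightCenter_of_lcsIn_eq_bot hleft hn Submodule.mem_top
  simp [mem_ex3_rightCenter] at ha

theorem ex3_eq_top_of_isIdeal {I : Submodule K (K × K)} (hI : (ex3 K).IsIdeal I)
    (hleft : ¬ I ≤ (ex3 K).leftCenter) : I = ⊤ := by
  obtain ⟨x, hxI, hx⟩ := exists_fst_ne_zero_of_not_le_ex3_leftCenter hleft
  have hb : ((0, 1) : K × K) ∈ I := by
    have hmul : (ex3 K).mul x (1, 0) = x.1 • (0, 1) := by simp [ex3_mul_apply]
    exact (I.smul_mem_iff hx).1 (hmul ▸ (hI (1, 0) x hxI).2)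
  have ha : ((1, 0) : K × K) ∈ I := by
    have hsub : x - x.2 • (0, 1) = x.1 • (1, 0) := by ext <;> simp
    exact (I.smul_mem_iff hx).1 (hsub ▸ I.sub_mem hxI (I.smul_mem x.2 hb))
  refine Submodule.eq_top_iff'.2 fun y => ?_
  simpa using I.add_mem (I.smul_mem y.1 ha) (I.smul_mem y.2 hb)

theorem ex3_normalClosure_eq_top_iff {S : Submodule K (K × K)} :
    (ex3 K).normalClosure S = ⊤ ↔ ¬ S ≤ (ex3 K).leftCenter := by
  constructor
  · intro htop hS
    have ha : ((1, 0) : K × K) ∈ (ex3 K).leftCenter :=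
      normalClosure_le (isIdeal_leftCenter _) hS (htop ▸ Submodule.mem_top)
    exact one_ne_zero (mem_ex3_leftCenter.1 ha)
  · intro hS
    exact sInf_eq_top.2 fun I hI => ex3_eq_top_of_isIdeal hI.1 fun h => hS (hI.2.trans h)

theorem ex3_normalClosure_rightCenter : (ex3 K).normalClosure (ex3 K).rightCenter = ⊤ := by
  refine ex3_normalClosure_eq_top_iff.2 fun h => ?_
  have hmem : ((1, -1) : K × K) ∈ (ex3 K).rightCenter := by simp [mem_ex3_rightCenter]
  exact one_ne_zero (mem_ex3_leftCenter.1 (h hmem))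

theorem isAtom_ex3_rightCenter : IsAtom (ex3 K).rightCenter := by
  rw [ex3_rightCenter]
  exact nonzero_span_atom _ (by simp)

end ex3

/-- the algebra `ex3 K` is 2-dimensional, has `a·a = b`, `a·b = b`,
`b·a = 0`, `b·b = 0`, is not nilpotent, yet `H = span{a − b}` is the unique nonzero
nilpotent subalgebra whose normal closure equals the whole algebra. -/
theorem stmt3 (K : Type*) [Field K] :
    Module.finrank K (K × K) = 2 ∧
    (ex3 K).mul (1, 0) (1, 0) = ((0 : K), (1 : K)) ∧
    (ex3 K).mul (1, 0) (0, 1) = ((0 : K), (1 : K)) ∧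
    (ex3 K).mul (0, 1) (1, 0) = ((0 : K), (0 : K)) ∧
    (ex3 K).mul (0, 1) (0, 1) = ((0 : K), (0 : K)) ∧
    ¬ (ex3 K).IsNilpotent ∧
    (let P : Submodule K (K × K) → Prop := fun H =>
      H ≠ ⊥ ∧ (ex3 K).IsSubalg H ∧ (∃ n, (ex3 K).lcsIn H n = ⊥) ∧
        (ex3 K).normalClosure H = ⊤
    P (Submodule.span K {((1 : K), (-1 : K))}) ∧
      ∀ H, P H → H = Submodule.span K {((1 : K), (-1 : K))}) := by
  rw [← ex3_rightCenter]
  refine ⟨by simp, by simp [ex3_mul_apply], by simp [ex3_mul_apply], by simp [ex3_mul_apply],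
    by simp [ex3_mul_apply], not_isNilpotent_ex3, ?existence, ?uniqueness⟩
  case existence =>
    exact ⟨isAtom_ex3_rightCenter.ne_bot, LeibnizMul.isSubalg_of_le_rightCenter le_rfl,
      ⟨1, LeibnizMul.lcsIn_one_eq_bot_of_le_rightCenter le_rfl⟩, ex3_normalClosure_rightCenter⟩
  case uniqueness =>
    rintro H ⟨hbot, -, ⟨n, hn⟩, htop⟩
    have hle : H ≤ (ex3 K).rightCenter :=
      ex3_le_rightCenter_of_lcsIn_eq_bot (ex3_normalClosure_eq_top_iff.1 htop) hn
    exact (isAtom_ex3_rightCenter.le_iff_eq hbot).1 hle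
end

section
/- Let A be an n-dimensional cyclic left Leibniz algebra generated by a, with characteristic polynomial p(x) = p₁(x)^{n₁}···p_s(x)^{n_s} of L_a, where p_j are distinct irreducibles. Then the maximal subalgebras of A are precisely the null spaces of r_j(L_a), where r_j(x) = p(x)/p_j(x), for j = 1, ..., s. -/
open Polynomial LinearMap

/-!
In a Leibniz algebra generated by `a`, the elements `x` for which `L_x` is a multiple of `L_a` form
a subalgebra: such operators commute, so `L_{xy} = [L_x, L_y] = 0`. Hence every `L_x` is a multiple
of `L_a`, every `L_a`-invariant subspace is a subalgebra, and `a` is a cyclic vector of `L_a`.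
Conversely, a subalgebra is either `L_a`-invariant or contained in `{x | L_x = 0}`, which is
`L_a`-invariant, and proper unless `L_a = 0`; so the maximal subalgebras are the maximal proper
`L_a`-invariant subspaces. These are the maximal `K[X]`-submodules of `A ≅ K[X] / (p)`, where `p` is
the characteristic polynomial of `L_a`, that is, the submodules `q A` with `q` an irreducible
divisor of `p`; and `q A` is the kernel of the complementary factor `p / q`.
-/

section Ring

variable {R M : Type*} [CommRing R] [IsDomain R] [AddCommGroup M] [Module R M]

theorem comap_toSpanSingleton_torsionBy {v : M} {q r : R} (hr : r ≠ 0)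
    (hv : Ideal.torsionOf R M v = Ideal.span {q * r}) :
    (Submodule.torsionBy R M r).comap (toSpanSingleton R M v) = Ideal.span {q} := by
  ext f
  calc f ∈ (Submodule.torsionBy R M r).comap (toSpanSingleton R M v)
      ↔ f * r ∈ Ideal.torsionOf R M v := by
        rw [Submodule.mem_comap, Submodule.mem_torsionBy_iff, toSpanSingleton_apply, smul_smul,
          mul_comm, Ideal.mem_torsionOf_iff]
    _ ↔ f ∈ Ideal.span {q} := by
        rw [hv, Ideal.mem_span_singleton, Ideal.mem_span_singleton, mul_dvd_mul_iff_right hr]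

theorem isCoatom_iff_exists_torsionBy [IsPrincipalIdealRing R] {v : M} {g : R}
    (hspan : Submodule.span R {v} = ⊤) (hg : g ≠ 0)
    (hv : Ideal.torsionOf R M v = Ideal.span {g}) {N : Submodule R M} :
    IsCoatom N ↔ ∃ q r, Irreducible q ∧ q * r = g ∧ N = Submodule.torsionBy R M r := by
  have hsurj : Function.Surjective (toSpanSingleton R M v) := by
    rwa [← LinearMap.range_eq_top, range_toSpanSingleton]
  rw [← Submodule.isCoatom_comap_iff hsurj, ← Ideal.isMaximal_def]
  constructor
  · intro hmax
    obtain ⟨q, hq : N.comap (toSpanSingleton R M v) = Ideal.span {q}⟩ :=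
      IsPrincipalIdealRing.principal (N.comap (toSpanSingleton R M v))
    obtain ⟨r, rfl⟩ : q ∣ g := by
      rw [← Ideal.span_singleton_le_span_singleton, ← hv, ← hq]
      exact LinearMap.ker_le_comap _
    refine ⟨q, r, ?_, rfl, Submodule.comap_injective_of_surjective hsurj ?_⟩
    · rw [hq] at hmax
      exact Ideal.irreducible_of_isMaximal_span_singleton (left_ne_zero_of_mul hg) hmax
    · rw [hq, comap_toSpanSingleton_torsionBy (right_ne_zero_of_mul hg) hv]
  · rintro ⟨q, r, hq, rfl, rfl⟩
    rw [comap_toSpanSingleton_torsionBy (right_ne_zero_of_mul hg) hv]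
    exact PrincipalIdealRing.isMaximal_of_irreducible hq

end Ring

section CyclicVector

variable {K V : Type*} [Field K] [AddCommGroup V] [Module K V]

/-- `v` is a cyclic vector of `T`: it generates `V` as a `K[X]`-module on which `X` acts as `T`. -/
def IsCyclicVector (T : Module.End K V) (v : V) : Prop :=
  Submodule.span K[X] {Module.AEval'.of T v} = ⊤

namespace IsCyclicVector

variable {T : Module.End K V} {v : V}

theorem torsionOf_eq_span_minpoly (hv : IsCyclicVector T v) :
    Ideal.torsionOf K[X] (Module.AEval' T) (Module.AEval'.of T v) =
      Ideal.span {minpoly K T} := by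
  rw [span_minpoly_eq_annihilator, ← Submodule.annihilator_top, ← hv,
    Ideal.annihilator_span_singleton_eq_torsionOf]

theorem natDegree_minpoly (hv : IsCyclicVector T v) :
    (minpoly K T).natDegree = Module.finrank K V := by
  let e : (K[X] ⧸ Ideal.span {minpoly K T}) ≃ₗ[K[X]] Module.AEval' T :=
    Submodule.quotEquivOfEq _ _ hv.torsionOf_eq_span_minpoly.symm ≪≫ₗ
      Ideal.quotTorsionOfEquivSpanSingleton K[X] (Module.AEval' T) (Module.AEval'.of T v) ≪≫ₗ
      LinearEquiv.ofTop _ hv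
  rw [← finrank_quotient_span_eq_natDegree]
  exact (e.restrictScalars K ≪≫ₗ (Module.AEval'.of T).symm).finrank_eq

variable [FiniteDimensional K V]

theorem minpoly_eq_charpoly (hv : IsCyclicVector T v) : minpoly K T = T.charpoly :=
  (eq_of_monic_of_dvd_of_natDegree_le (minpoly.monic (Algebra.IsIntegral.isIntegral T))
    T.charpoly_monic (minpoly_dvd_charpoly T)
    (by rw [T.charpoly_natDegree, hv.natDegree_minpoly])).symm

theorem isCoatom_invtSubmodule_iff (hv : IsCyclicVector T v) {N : T.invtSubmodule} :
    IsCoatom N ↔ ∃ q r, Irreducible q ∧ q * r = T.charpoly ∧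
      (N : Submodule K V) = LinearMap.ker (aeval T r) := by
  let e : T.invtSubmodule ≃o Submodule K[X] (Module.AEval' T) := Module.AEval.mapSubmodule K V T
  have he (r : K[X]) : e N = Submodule.torsionBy K[X] (Module.AEval' T) r ↔
      (N : Submodule K V) = LinearMap.ker (aeval T r) :=
    e.eq_symm_apply.symm.trans Subtype.ext_iff
  have htors := hv.torsionOf_eq_span_minpoly
  rw [hv.minpoly_eq_charpoly] at htors
  rw [← e.isCoatom_iff, isCoatom_iff_exists_torsionBy hv T.charpoly_monic.ne_zero htors]
  simp only [he]

end IsCyclicVector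

end CyclicVector

section Factorization

variable {ι M : Type*} [Fintype ι]

theorem mul_prod_pow_sub_ite [CommMonoid M] [DecidableEq ι] (p : ι → M) {e : ι → ℕ} {j : ι}
    (hj : 1 ≤ e j) :
    p j * ∏ k, p k ^ (e k - if k = j then 1 else 0) = ∏ k, p k ^ e k := by
  rw [← Finset.mul_prod_erase _ _ (Finset.mem_univ j),
    ← Finset.mul_prod_erase _ (fun k => p k ^ e k) (Finset.mem_univ j), if_pos rfl, ← mul_assoc,
    mul_pow_sub_one (Nat.one_le_iff_ne_zero.mp hj)]
  congr 1
  exact Finset.prod_congr rfl fun k hk => by rw [if_neg (Finset.ne_of_mem_erase hk), Nat.sub_zero]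

theorem exists_associated_of_prime_dvd_prod_pow [CommMonoidWithZero M] [IsCancelMulZero M]
    {p : ι → M} {e : ι → ℕ} (hp : ∀ j, Irreducible (p j)) {q : M} (hq : Prime q)
    (h : q ∣ ∏ j, p j ^ e j) : ∃ j, Associated q (p j) := by
  obtain ⟨j, -, hj⟩ := (hq.dvd_finsetProd_iff _).mp h
  exact ⟨j, hq.irreducible.associated_of_dvd (hp j) (hq.dvd_of_dvd_pow hj)⟩

end Factorization

section Aeval

variable {R V : Type*} [CommRing R] [AddCommGroup V] [Module R V] (T : Module.End R V)

theorem ker_aeval_mem_invtSubmodule (f : R[X]) : LinearMap.ker (aeval T f) ∈ T.invtSubmodule :=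
  ((Module.AEval.mapSubmodule R V T).symm (Submodule.torsionBy R[X] _ f)).2

theorem ker_aeval_le_of_dvd {f g : R[X]} (h : f ∣ g) :
    LinearMap.ker (aeval T f) ≤ LinearMap.ker (aeval T g) := by
  obtain ⟨c, rfl⟩ := h
  rw [mul_comm, map_mul]
  exact LinearMap.ker_le_ker_comp _ _

theorem ker_aeval_eq_of_associated {f g : R[X]} (h : Associated f g) :
    LinearMap.ker (aeval T f) = LinearMap.ker (aeval T g) :=
  le_antisymm (ker_aeval_le_of_dvd T h.dvd) (ker_aeval_le_of_dvd T h.symm.dvd)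

end Aeval

namespace LeibnizMul

open Module.End (invtSubmodule)

variable {K A : Type*} [Field K] [AddCommGroup A] [Module K A] {m : LeibnizMul K A} {a : A}

theorem mul_mul_eq_zero_of_mem_span {x y : A} (hx : m.mul x ∈ Submodule.span K {m.mul a})
    (hy : m.mul y ∈ Submodule.span K {m.mul a}) : m.mul (m.mul x y) = 0 := by
  obtain ⟨c, hc⟩ := Submodule.mem_span_singleton.mp hx
  obtain ⟨d, hd⟩ := Submodule.mem_span_singleton.mp hy
  have hcomm : Commute (m.mul x : Module.End K A) (m.mul y) := by
    rw [← hc, ← hd]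
    exact ((Commute.refl _).smul_left c).smul_right d
  ext z
  exact right_eq_add.mp ((LinearMap.congr_fun hcomm.eq z).symm.trans (m.leibniz x y z))

theorem eq_top_of_subalgGen_eq_top (ha : m.subalgGen a = ⊤) {S : Submodule K A}
    (hS : m.IsSubalg S) (haS : a ∈ S) : S = ⊤ :=
  top_le_iff.mp (ha ▸ sInf_le ⟨hS, haS⟩)

theorem mul_mem_span_of_subalgGen_eq_top (ha : m.subalgGen a = ⊤) (x : A) :
    m.mul x ∈ Submodule.span K {m.mul a} := by
  have hS : m.IsSubalg ((Submodule.span K {m.mul a}).comap m.mul) := by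
    intro x hx y hy
    rw [Submodule.mem_comap, mul_mul_eq_zero_of_mem_span hx hy]
    exact Submodule.zero_mem _
  have htop := eq_top_of_subalgGen_eq_top ha hS (Submodule.mem_span_singleton_self _)
  exact Submodule.eq_top_iff'.mp htop x

theorem mul_mul_eq_zero_of_subalgGen_eq_top (ha : m.subalgGen a = ⊤) (x y : A) :
    m.mul (m.mul x y) = 0 :=
  mul_mul_eq_zero_of_mem_span (mul_mem_span_of_subalgGen_eq_top ha x)
    (mul_mem_span_of_subalgGen_eq_top ha y)

theorem isSubalg_of_mem_invtSubmodule (ha : m.subalgGen a = ⊤) {S : Submodule K A}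
    (hS : S ∈ invtSubmodule (m.mul a)) : m.IsSubalg S := by
  intro x _ y hy
  obtain ⟨c, hc⟩ := Submodule.mem_span_singleton.mp (mul_mem_span_of_subalgGen_eq_top ha x)
  rw [← hc]
  exact S.smul_mem c (hS hy)

theorem isCyclicVector_of_subalgGen_eq_top (ha : m.subalgGen a = ⊤) :
    IsCyclicVector (m.mul a) a := by
  let e : invtSubmodule (m.mul a) ≃o Submodule K[X] (Module.AEval' (m.mul a)) :=
    Module.AEval.mapSubmodule K A (m.mul a)
  let N := e.symm (Submodule.span K[X] {Module.AEval'.of (m.mul a) a})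
  have haN : a ∈ (N : Submodule K A) := Submodule.mem_span_singleton_self (Module.AEval'.of _ a)
  have hN : N = ⊤ :=
    Subtype.ext (eq_top_of_subalgGen_eq_top ha (isSubalg_of_mem_invtSubmodule ha N.2) haN)
  exact (map_eq_top_iff e.symm).mp hN

theorem IsSubalg.mem_invtSubmodule_or_le_ker (ha : m.subalgGen a = ⊤) {S : Submodule K A}
    (hS : m.IsSubalg S) : S ∈ invtSubmodule (m.mul a) ∨ S ≤ LinearMap.ker m.mul := by
  refine or_iff_not_imp_right.mpr fun hker => ?_
  obtain ⟨x, hxS, hx⟩ := SetLike.not_le_iff_exists.mp hker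
  obtain ⟨c, hc⟩ := Submodule.mem_span_singleton.mp (mul_mem_span_of_subalgGen_eq_top ha x)
  have hc0 : c ≠ 0 := by
    rintro rfl
    exact hx (hc.symm.trans (zero_smul K _))
  intro y hy
  have hmem : c • m.mul a y ∈ S := by
    rw [← LinearMap.smul_apply, hc]
    exact hS x hxS y hy
  exact (S.smul_mem_iff hc0).mp hmem

theorem IsSubalg.exists_invtSubmodule_ge (ha : m.subalgGen a = ⊤) {S : Submodule K A}
    (hS : m.IsSubalg S) (hne : S ≠ ⊤) : ∃ N : invtSubmodule (m.mul a), S ≤ N ∧ N ≠ ⊤ := by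
  rcases hS.mem_invtSubmodule_or_le_ker ha with hinv | hker
  · exact ⟨⟨S, hinv⟩, le_rfl, fun h => hne (congrArg Subtype.val h)⟩
  by_cases hmul : m.mul = 0
  · exact ⟨⟨S, fun y _ => by simp [hmul]⟩, le_rfl, fun h => hne (congrArg Subtype.val h)⟩
  · exact ⟨⟨LinearMap.ker m.mul, fun y _ => mul_mul_eq_zero_of_subalgGen_eq_top ha a y⟩, hker,
      fun h => hmul (LinearMap.ker_eq_top.mp (congrArg Subtype.val h))⟩

theorem isMaxSubalg_iff_isCoatom (ha : m.subalgGen a = ⊤) {M : Submodule K A} :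
    m.IsMaxSubalg M ↔ ∃ N : invtSubmodule (m.mul a), IsCoatom N ∧ M = N := by
  constructor
  · rintro ⟨hM, hne, hmax⟩
    obtain ⟨N, hMN, hN⟩ := hM.exists_invtSubmodule_ge ha hne
    have hinv_max (N' : invtSubmodule (m.mul a)) (hlt : M < N') : N' = ⊤ :=
      Subtype.ext (hmax N' (isSubalg_of_mem_invtSubmodule ha N'.2) hlt)
    obtain rfl : M = N := hMN.eq_of_not_lt fun hlt => hN (hinv_max N hlt)
    exact ⟨N, ⟨hN, hinv_max⟩, rfl⟩
  · rintro ⟨N, hN, rfl⟩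
    refine ⟨isSubalg_of_mem_invtSubmodule ha N.2, fun h => hN.1 (Subtype.ext h), ?_⟩
    intro S hS hlt
    by_contra hne
    obtain ⟨N', hSN', hN'⟩ := hS.exists_invtSubmodule_ge ha hne
    exact hN' (hN.2 N' (hlt.trans_le hSN'))

theorem isMaxSubalg_iff_exists_ker_aeval [FiniteDimensional K A] (ha : m.subalgGen a = ⊤)
    {M : Submodule K A} :
    m.IsMaxSubalg M ↔ ∃ q r, Irreducible q ∧ q * r = (m.mul a).charpoly ∧
      M = LinearMap.ker (aeval (m.mul a) r) := by
  rw [isMaxSubalg_iff_isCoatom ha]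
  constructor
  · rintro ⟨N, hN, rfl⟩
    exact (isCyclicVector_of_subalgGen_eq_top ha).isCoatom_invtSubmodule_iff.mp hN
  · rintro ⟨q, r, hq, hqr, rfl⟩
    refine ⟨⟨_, ker_aeval_mem_invtSubmodule _ r⟩, ?_, rfl⟩
    exact (isCyclicVector_of_subalgGen_eq_top ha).isCoatom_invtSubmodule_iff.mpr
      ⟨q, r, hq, hqr, rfl⟩

end LeibnizMul

theorem stmt11_general {ι K A : Type*} [Fintype ι] [DecidableEq ι] [Field K] [AddCommGroup A]
    [Module K A] [FiniteDimensional K A] (m : LeibnizMul K A) (a : A) (hcyc : m.subalgGen a = ⊤)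
    (p : ι → K[X]) (e : ι → ℕ) (hirr : ∀ j, Irreducible (p j)) (hpos : ∀ j, 1 ≤ e j)
    (hfact : (m.mul a).charpoly = ∏ j, p j ^ e j) (M : Submodule K A) :
    m.IsMaxSubalg M ↔
      ∃ j, M = LinearMap.ker (aeval (m.mul a) (∏ k, p k ^ (e k - if k = j then 1 else 0))) := by
  have hcofactor (j : ι) := (mul_prod_pow_sub_ite p (hpos j)).trans hfact.symm
  rw [LeibnizMul.isMaxSubalg_iff_exists_ker_aeval hcyc]
  constructor
  · rintro ⟨q, r, hq, hqr, rfl⟩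
    obtain ⟨j, hj⟩ := exists_associated_of_prime_dvd_prod_pow hirr hq.prime
      (hfact ▸ Dvd.intro r hqr)
    exact ⟨j, ker_aeval_eq_of_associated _
      ((Associated.of_eq (hqr.trans (hcofactor j).symm)).of_mul_left hj hq.ne_zero)⟩
  · rintro ⟨j, rfl⟩
    exact ⟨p j, _, hirr j, hcofactor j, rfl⟩

/-- for a cyclic Leibniz algebra generated by `a` with
`charpoly(L_a) = p₁^{n₁} ⋯ p_s^{n_s}`, the maximal subalgebras are exactly the
null spaces of `r_j(L_a)` where `r_j = p/p_j`. -/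
theorem stmt11 {K A : Type*} [Field K] [AddCommGroup A] [Module K A] [FiniteDimensional K A]
    (m : LeibnizMul K A) (a : A) (hcyc : m.subalgGen a = ⊤)
    (s : ℕ) (p : Fin s → Polynomial K) (e : Fin s → ℕ)
    (hirr : ∀ j, Irreducible (p j)) (hmonic : ∀ j, (p j).Monic)
    (hdist : Function.Injective p) (hpos : ∀ j, 1 ≤ e j)
    (hfact : LinearMap.charpoly (m.mul a) = ∏ j, p j ^ e j) :
    ∀ M : Submodule K A,
      m.IsMaxSubalg M ↔
        ∃ j : Fin s,
          M = LinearMap.ker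
            (Polynomial.aeval (m.mul a)
              (∏ k, p k ^ (e k - if k = j then 1 else 0))) :=
  stmt11_general m a hcyc p e hirr hpos hfact
end
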